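/- arXiv:2105.09500 — 2 statements merged into one kernel-verified Lean document; each statement's English description precedes it below -/
import Mathlib

section
/- Let k ≥ 2 be an integer and let G be a connected simple graph on n vertices. Suppose that for every 4-element vertex subset S such that the subgraph of G induced on S is isomorphic to one of K_{1,2} ∪ K_1, K_3 ∪ K_1, K_{1,3}, K_{1,3}+e, or P_4, and for every pair of vertices x, y ∈ S that are nonadjacent in G, one has d(x) + d(y) ≥ n − k + 1 (degrees taken in G). Then G has a spanning tree with at most k leaves. -/
open SimpleGraph

/-- `K_{1,2} ∪ K_1`: a path on the vertices 0,1,2 together with the isolated vertex 3. -/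
def pathUnionK1 : SimpleGraph (Fin 4) := SimpleGraph.fromEdgeSet {s(0, 1), s(1, 2)}

/-- `K_3 ∪ K_1`: a triangle on the vertices 0,1,2 together with the isolated vertex 3. -/
def triangleUnionK1 : SimpleGraph (Fin 4) :=
  SimpleGraph.fromEdgeSet {s(0, 1), s(1, 2), s(0, 2)}

/-- `K_{1,3}`: the star with center 0 and leaves 1,2,3. -/
def star13 : SimpleGraph (Fin 4) := SimpleGraph.fromEdgeSet {s(0, 1), s(0, 2), s(0, 3)}

/-- `K_{1,3} + e` (the paw): the star `K_{1,3}` with an added edge between leaves 1 and 2. -/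
def star13PlusE : SimpleGraph (Fin 4) :=
  SimpleGraph.fromEdgeSet {s(0, 1), s(0, 2), s(0, 3), s(1, 2)}

/-- `P_4`: the path 0-1-2-3. -/
def path4 : SimpleGraph (Fin 4) := SimpleGraph.fromEdgeSet {s(0, 1), s(1, 2), s(2, 3)}

/-
Let `T` be a spanning tree of the connected graph `G` with the least number `ℓ` of leaves, and
suppose `ℓ ≥ 3`. Two leaves `x`, `y` are never adjacent in `G`: the `T`-path from `x` to `y` passes
through a vertex of degree at least three, and exchanging a path edge at that vertex for `xy` would
give a tree with fewer leaves. Root `T` at a leaf `x`. If `w` is a `G`-neighbour of `x` with parent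
`u ≠ x`, exchanging `uw` for `xw` gives another optimal tree, whose leaves are those of `T` with `x`
replaced by `u`. Hence `u` has degree two in `T`, is not a leaf of `T` and is not adjacent in `G` to
any other leaf `y`. So the parent map is injective on `N(x)`, and its image, `N(y)` and the leaves
other than `x` are pairwise disjoint, which gives `d(x) + d(y) + ℓ ≤ n + 1`.

It remains to treat a nonadjacent pair `x`, `y` lying in none of the five kinds of quadruples.
Inspecting the quadruples `{x, y, u, v}` with `u` a neighbour of `x` shows that every other vertex
is adjacent to both `x` and `y`, so the degree sum of `x` and `y` is large anyway.
-/

section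

variable {V : Type*} {G T : SimpleGraph V} {a b c d r u v w x y z : V}

section Leaves

/-- The set of leaves of `T`, a leaf being a vertex with exactly one neighbour. -/
def leafSet (T : SimpleGraph V) : Set V := {v | (T.neighborSet v).ncard = 1}

lemma mem_leafSet_iff : v ∈ leafSet T ↔ ∃ w, T.neighborSet v = {w} := Set.ncard_eq_one

lemma subsingleton_neighborSet_of_mem_leafSet (hv : v ∈ leafSet T) :
    (T.neighborSet v).Subsingleton := by
  obtain ⟨w, hw⟩ := mem_leafSet_iff.1 hv
  simp only [hw, Set.subsingleton_singleton]

lemma notMem_leafSet_of_adj_of_adj (hu : T.Adj v u) (hw : T.Adj v w) (hne : u ≠ w) :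
    v ∉ leafSet T :=
  fun hv ↦ hne (subsingleton_neighborSet_of_mem_leafSet hv hu hw)

lemma exists_mem_leafSet_ne_ne (h : 2 < (leafSet T).ncard) (x y : V) :
    ∃ z ∈ leafSet T, z ≠ x ∧ z ≠ y := by
  by_contra! hall
  have hsub : leafSet T ⊆ {x, y} := fun z hz ↦ or_iff_not_imp_left.2 (hall z hz)
  have := (Set.ncard_le_ncard hsub).trans (Set.ncard_insert_le x {y})
  rw [Set.ncard_singleton] at this
  omega

end Leaves

section Trees

lemma mem_of_connected_of_forall_adj_mem (hT : T.Connected) {s : Set V} (hx : x ∈ s)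
    (hs : ∀ u ∈ s, ∀ v, T.Adj u v → v ∈ s) (y : V) : y ∈ s := by
  by_contra hy
  obtain ⟨p⟩ := hT.preconnected x y
  obtain ⟨e, -, hfst, hsnd⟩ := p.exists_boundary_dart s hx hy
  exact hsnd (hs _ hfst _ e.adj)

lemma not_reachable_deleteEdges_of_mem_edges (hT : T.IsAcyclic) {p : T.Walk c d} (hp : p.IsPath)
    {e : Sym2 V} (he : e ∈ p.edges) : ¬ (T.deleteEdges {e}).Reachable c d := by
  classical
  induction e with | _ a b
  rw [reachable_deleteEdges_iff_exists_walk]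
  rintro ⟨q, hq⟩
  have hpq : p = q.bypass :=
    congrArg Subtype.val ((hT.subsingleton_path c d).elim ⟨p, hp⟩ ⟨q.bypass, q.bypass_isPath⟩)
  exact hq (q.edges_bypass_subset_edges (hpq ▸ he))

lemma reachable_deleteEdges_or (hT : T.Connected) (a b v : V) :
    (T.deleteEdges {s(a, b)}).Reachable a v ∨ (T.deleteEdges {s(a, b)}).Reachable b v := by
  refine mem_of_connected_of_forall_adj_mem hT
    (s := {v | (T.deleteEdges {s(a, b)}).Reachable a v ∨ (T.deleteEdges {s(a, b)}).Reachable b v})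
    (x := a) (.inl .rfl) (fun u hu v huv ↦ ?_) v
  by_cases he : s(u, v) = s(a, b)
  · rcases Sym2.eq_iff.1 he with ⟨-, rfl⟩ | ⟨-, rfl⟩
    exacts [.inr .rfl, .inl .rfl]
  · have huv' : (T.deleteEdges {s(a, b)}).Reachable u v :=
      (deleteEdges_adj.2 ⟨huv, he⟩).reachable
    exact hu.imp (·.trans huv') (·.trans huv')

/-- `u` is the parent of `v` in the tree `T` rooted at `r`, expressed through distances to `r`. -/
def IsParent (T : SimpleGraph V) (r u v : V) : Prop := T.Adj u v ∧ T.dist r v = T.dist r u + 1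

lemma exists_isParent (hT : T.Connected) (hne : v ≠ r) : ∃ u, IsParent T r u v := by
  obtain ⟨p, hp⟩ := hT.exists_walk_length_eq_dist r v
  have hnil : ¬ p.Nil := Walk.not_nil_of_ne hne.symm
  have hadj := p.adj_penultimate hnil
  have hle : T.dist r p.penultimate ≤ p.dropLast.length := dist_le _
  have hlen := p.length_dropLast_add_one hnil
  have htri := hT.dist_triangle (u := r) (v := p.penultimate) (w := v)
  rw [dist_eq_one_iff_adj.2 hadj] at htri
  exact ⟨p.penultimate, hadj, by omega⟩

lemma IsParent.eq_root_of_adj (hT : T.Connected) (h : IsParent T r u v) (hadj : T.Adj r v) :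
    u = r := by
  have hdist := h.2
  rw [dist_eq_one_iff_adj.2 hadj] at hdist
  exact (hT.dist_eq_zero_iff.1 (by omega)).symm

lemma IsParent.not_reachable_deleteEdges (hT : T.IsTree) (h : IsParent T r u v) :
    ¬ (T.deleteEdges {s(u, v)}).Reachable r v := by
  classical
  obtain ⟨q, hq, hlen⟩ := hT.connected.exists_path_of_dist r u
  have hv : v ∉ q.support := fun hv ↦ by
    have hdist : T.dist r v ≤ (q.takeUntil v hv).length := dist_le _
    have htake := q.length_takeUntil_le_length hv
    have hparent := h.2
    omega
  refine not_reachable_deleteEdges_of_mem_edges hT.isAcyclic (hq.concat hv h.1) ?_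
  simp only [Walk.edges_concat, List.concat_eq_append, List.mem_append, List.mem_singleton, or_true]

lemma exists_adj_adj_of_mem_support {p : T.Walk x y} (hp : p.IsPath) (hb : b ∈ p.support)
    (hbx : b ≠ x) (hby : b ≠ y) : ∃ a d, a ≠ d ∧ s(a, b) ∈ p.edges ∧ s(b, d) ∈ p.edges := by
  obtain ⟨i, rfl, hi⟩ := Walk.mem_support_iff_exists_getVert.1 hb
  have hi₀ : i ≠ 0 := by rintro rfl; exact hbx p.getVert_zero
  have hi₁ : i ≠ p.length := by rintro rfl; exact hby p.getVert_length
  obtain ⟨a, d, hne, hnbr⟩ := Set.ncard_eq_two.1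
    (hp.ncard_neighborSet_toSubgraph_internal_eq_two hi₀ (by omega))
  have hmem : ∀ w ∈ ({a, d} : Set V), s(p.getVert i, w) ∈ p.edges := fun w hw ↦
    Walk.adj_toSubgraph_iff_mem_edges.1 (hnbr ▸ hw : w ∈ p.toSubgraph.neighborSet (p.getVert i))
  exact ⟨a, d, hne, Sym2.eq_swap ▸ hmem a (by simp), hmem d (by simp)⟩

lemma exists_branch_vertex_of_mem_leafSet (hT : T.Connected) {p : T.Walk x y} (hp : p.IsPath)
    (hx : x ∈ leafSet T) (hy : y ∈ leafSet T) (hz : z ∈ leafSet T) (hxy : x ≠ y) (hzx : z ≠ x)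
    (hzy : z ≠ y) :
    ∃ a b c d, s(a, b) ∈ p.edges ∧ T.Adj b c ∧ T.Adj b d ∧ a ≠ c ∧ a ≠ d ∧ c ≠ d := by
  have hz' : z ∉ p.support := hp.isTrail.not_mem_support_of_subsingleton_neighborSet hzx hzy
    (subsingleton_neighborSet_of_mem_leafSet hz)
  obtain ⟨q⟩ := hT.preconnected x z
  obtain ⟨⟨⟨b, c⟩, hbc⟩, -, hb, hc⟩ :=
    q.exists_boundary_dart {v | v ∈ p.support} p.start_mem_support hz'
  have hnil : ¬ p.Nil := Walk.not_nil_of_ne hxy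
  have hbx : b ≠ x := by
    rintro rfl
    exact notMem_leafSet_of_adj_of_adj hbc (p.adj_snd hnil)
      (fun h ↦ hc (h ▸ p.getVert_mem_support 1)) hx
  have hby : b ≠ y := by
    rintro rfl
    exact notMem_leafSet_of_adj_of_adj hbc (p.adj_penultimate hnil).symm
      (fun h ↦ hc (h ▸ p.getVert_mem_support _)) hy
  obtain ⟨a, d, had, hab, hbd⟩ := exists_adj_adj_of_mem_support hp hb hbx hby
  refine ⟨a, b, c, d, hab, hbc, p.adj_of_mem_edges hbd, ?_, had, ?_⟩
  · rintro rfl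
    exact hc (p.fst_mem_support_of_mem_edges hab)
  · rintro rfl
    exact hc (p.snd_mem_support_of_mem_edges hbd)

end Trees

section Exchange

/-- The graph `T - ab + cd`: for a tree `T` whose edge `ab` separates `c` from `d`, this is the
elementary exchange producing another tree. -/
def exchangeEdge (T : SimpleGraph V) (a b c d : V) : SimpleGraph V :=
  T.deleteEdges {s(a, b)} ⊔ edge c d

lemma exchangeEdge_le (hT : T ≤ G) (hcd : G.Adj c d) : exchangeEdge T a b c d ≤ G :=
  sup_le ((deleteEdges_le _).trans hT) ((edge_le_iff _).2 (.inr hcd))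

lemma adj_exchangeEdge_of_ne (hcd : c ≠ d) : (exchangeEdge T a b c d).Adj c d :=
  .inr ((edge_adj _ _ _ _).2 ⟨.inl ⟨rfl, rfl⟩, hcd⟩)

lemma adj_exchangeEdge_of_adj (h : T.Adj v w) (hne : s(v, w) ≠ s(a, b)) :
    (exchangeEdge T a b c d).Adj v w :=
  .inl (deleteEdges_adj.2 ⟨h, hne⟩)

lemma neighborSet_exchangeEdge_of_notMem (hv : v ∉ ({a, b, c, d} : Set V)) :
    (exchangeEdge T a b c d).neighborSet v = T.neighborSet v := by
  ext w
  simp only [Set.mem_insert_iff, Set.mem_singleton_iff, not_or] at hv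
  simp [exchangeEdge, edge_adj, hv]

lemma neighborSet_exchangeEdge_left (hac : a ≠ c) (had : a ≠ d) :
    (exchangeEdge T a b c d).neighborSet a = T.neighborSet a \ {b} := by
  ext w
  simp only [exchangeEdge, mem_neighborSet, sup_adj, deleteEdges_adj, edge_adj]
  aesop

lemma neighborSet_exchangeEdge_right (hbc : b ≠ c) :
    (exchangeEdge T a b c b).neighborSet b = insert c (T.neighborSet b \ {a}) := by
  ext w
  simp only [exchangeEdge, mem_neighborSet, sup_adj, deleteEdges_adj, edge_adj]
  aesop

lemma isTree_exchangeEdge (hT : T.IsTree) (h : ¬ (T.deleteEdges {s(a, b)}).Reachable c d) :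
    (exchangeEdge T a b c d).IsTree := by
  have hcd : c ≠ d := by rintro rfl; exact h .rfl
  have hle : T.deleteEdges {s(a, b)} ≤ exchangeEdge T a b c d := le_sup_left
  have hcd' := (adj_exchangeEdge_of_ne (T := T) (a := a) (b := b) hcd).reachable
  have hc := reachable_deleteEdges_or hT.connected a b c
  have hd := reachable_deleteEdges_or hT.connected a b d
  have hab : (exchangeEdge T a b c d).Reachable a b := by
    rcases hc with hc | hc <;> rcases hd with hd | hd
    · exact absurd (hc.symm.trans hd) h
    · exact (hc.mono hle).trans (hcd'.trans (hd.mono hle).symm)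
    · exact (hd.mono hle).trans (hcd'.symm.trans (hc.mono hle).symm)
    · exact absurd (hc.symm.trans hd) h
  have ha (v : V) : (exchangeEdge T a b c d).Reachable a v :=
    (reachable_deleteEdges_or hT.connected a b v).elim (·.mono hle) (hab.trans <| ·.mono hle)
  have : Nonempty V := ⟨a⟩
  exact ⟨⟨fun u v ↦ (ha u).symm.trans (ha v)⟩,
    (hT.isAcyclic.anti (deleteEdges_le _)).sup_edge_of_not_reachable h⟩

lemma leafSet_exchangeEdge_subset (hT : T.Connected) (hcd : c ≠ d) (hadj : ¬ T.Adj c d)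
    (hb : b ∉ leafSet (exchangeEdge T a b c d)) :
    leafSet (exchangeEdge T a b c d) ⊆ insert a (leafSet T \ {c, d}) := by
  intro v hv
  by_cases hva : v = a
  · exact .inl hva
  have hvb : v ≠ b := fun h ↦ hb (h ▸ hv)
  have hkeep (w : V) : s(v, w) ≠ s(a, b) := by simp [hva, hvb]
  have : Nontrivial V := ⟨c, d, hcd⟩
  obtain ⟨t, ht⟩ := hT.preconnected.exists_adj_of_nontrivial v
  have ht' : (exchangeEdge T a b c d).Adj v t := adj_exchangeEdge_of_adj ht (hkeep t)
  have hvc : v ≠ c := by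
    rintro rfl
    exact notMem_leafSet_of_adj_of_adj (adj_exchangeEdge_of_ne hcd) ht'
      (fun h ↦ hadj (h ▸ ht)) hv
  have hvd : v ≠ d := by
    rintro rfl
    exact notMem_leafSet_of_adj_of_adj (adj_exchangeEdge_of_ne hcd).symm ht'
      (fun h ↦ hadj (h ▸ ht.symm)) hv
  have hN := neighborSet_exchangeEdge_of_notMem (T := T) (v := v) (a := a) (b := b) (c := c)
    (d := d) (by simp [hva, hvb, hvc, hvd])
  exact .inr ⟨by rwa [leafSet, Set.mem_ofPred_eq, hN] at hv, by simp [hvc, hvd]⟩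

end Exchange

section MinimalTrees

/-- `T` is a spanning tree of `G` with the least possible number of leaves. Leaves are counted by
`Set.ncard`, so the notion is only meaningful when `V` is finite. -/
structure IsMinLeafSpanningTree (G T : SimpleGraph V) : Prop where
  le : T ≤ G
  isTree : T.IsTree
  ncard_leafSet_le : ∀ ⦃T' : SimpleGraph V⦄, T' ≤ G → T'.IsTree →
    (leafSet T).ncard ≤ (leafSet T').ncard

variable [Finite V]

lemma exists_isMinLeafSpanningTree (hG : G.Connected) : ∃ T, IsMinLeafSpanningTree G T := by
  obtain ⟨T₀, hle₀, hT₀⟩ := hG.exists_isTree_le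
  obtain ⟨T, ⟨hle, hT⟩, hmin⟩ := Set.exists_min_image {T | T ≤ G ∧ T.IsTree}
    (fun T ↦ (leafSet T).ncard) (Set.toFinite _) ⟨T₀, hle₀, hT₀⟩
  exact ⟨T, hle, hT, fun T' hle' hT' ↦ hmin T' ⟨hle', hT'⟩⟩

namespace IsMinLeafSpanningTree

lemma not_adj_of_mem_leafSet (hT : IsMinLeafSpanningTree G T) (hL : 2 < (leafSet T).ncard)
    (hx : x ∈ leafSet T) (hy : y ∈ leafSet T) : ¬ G.Adj x y := by
  intro hxy
  obtain ⟨z, hz, hzx, hzy⟩ := exists_mem_leafSet_ne_ne hL x y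
  have hbranch {p : T.Walk x y} (hp : p.IsPath) :=
    exists_branch_vertex_of_mem_leafSet hT.isTree.connected hp hx hy hz hxy.ne hzx hzy
  have hnadj : ¬ T.Adj x y := fun hadj ↦ by
    obtain ⟨a, b, c, d, hab, hbc, hbd, -, -, hcd⟩ := hbranch (Path.singleton hadj).2
    have hb : b ∈ ({x, y} : Set V) := by
      simpa using Walk.snd_mem_support_of_mem_edges _ hab
    refine notMem_leafSet_of_adj_of_adj hbc hbd hcd ?_
    rcases hb with rfl | rfl
    exacts [hx, hy]
  obtain ⟨p, hp⟩ := hT.isTree.connected.exists_isPath x y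
  obtain ⟨a, b, c, d, hab, hbc, hbd, hac, had, hcd⟩ := hbranch hp
  set T' := exchangeEdge T a b x y
  have hb : b ∉ leafSet T' := notMem_leafSet_of_adj_of_adj
    (adj_exchangeEdge_of_adj hbc (by simp [hac.symm, hbc.ne']))
    (adj_exchangeEdge_of_adj hbd (by simp [had.symm, hbd.ne'])) hcd
  have hmin := hT.ncard_leafSet_le (exchangeEdge_le hT.le hxy) (isTree_exchangeEdge hT.isTree
    (not_reachable_deleteEdges_of_mem_edges hT.isTree.isAcyclic hp hab))
  have hsub := Set.ncard_le_ncard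
    (leafSet_exchangeEdge_subset hT.isTree.connected hxy.ne hnadj hb)
  have hins := Set.ncard_insert_le a (leafSet T \ {x, y})
  have hdiff := Set.ncard_sdiff_add_ncard_of_subset (Set.pair_subset hx hy)
  rw [Set.ncard_pair hxy.ne] at hdiff
  omega

lemma leafSet_exchangeEdge_parent_subset (hT : IsMinLeafSpanningTree G T)
    (hL : 2 < (leafSet T).ncard) (hx : x ∈ leafSet T) (hxw : G.Adj x w) (huw : IsParent T x u w)
    (hux : u ≠ x) : leafSet (exchangeEdge T u w x w) ⊆ insert u (leafSet T \ {x}) := by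
  have hnadj : ¬ T.Adj x w := fun h ↦ hux (huw.eq_root_of_adj hT.isTree.connected h)
  have hw : w ∉ leafSet (exchangeEdge T u w x w) := fun hw ↦ by
    have hcard := Set.ncard_exchange (s := T.neighborSet w) (fun h ↦ hnadj h.symm) huw.1.symm
    rw [← neighborSet_exchangeEdge_right hxw.ne'] at hcard
    exact hT.not_adj_of_mem_leafSet hL hx (hcard.symm.trans hw) hxw
  exact (leafSet_exchangeEdge_subset hT.isTree.connected hxw.ne hnadj hw).trans
    (Set.insert_subset_insert (Set.sdiff_subset_sdiff_right (by simp)))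

lemma exchangeEdge_parent (hT : IsMinLeafSpanningTree G T)
    (hL : 2 < (leafSet T).ncard) (hx : x ∈ leafSet T) (hxw : G.Adj x w) (huw : IsParent T x u w)
    (hux : u ≠ x) : IsMinLeafSpanningTree G (exchangeEdge T u w x w) ∧
      leafSet (exchangeEdge T u w x w) = insert u (leafSet T \ {x}) ∧ u ∉ leafSet T := by
  have hle : exchangeEdge T u w x w ≤ G := exchangeEdge_le hT.le hxw
  have htree := isTree_exchangeEdge hT.isTree (huw.not_reachable_deleteEdges hT.isTree)
  have hmin := hT.ncard_leafSet_le hle htree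
  have hsub := hT.leafSet_exchangeEdge_parent_subset hL hx hxw huw hux
  have hins := Set.ncard_insert_le u (leafSet T \ {x})
  have hdiff := Set.ncard_sdiff_singleton_add_one hx
  have hcard := Set.ncard_le_ncard hsub
  refine ⟨⟨hle, htree, fun T' hle' hT' ↦ ?_⟩, Set.eq_of_subset_of_ncard_le hsub (by omega),
    fun hu ↦ ?_⟩
  · exact le_trans (by omega) (hT.ncard_leafSet_le hle' hT')
  · rw [Set.insert_eq_of_mem (show u ∈ leafSet T \ {x} from ⟨hu, hux⟩)] at hcard
    omega

lemma notMem_leafSet_of_isParent (hT : IsMinLeafSpanningTree G T)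
    (hL : 2 < (leafSet T).ncard) (hx : x ∈ leafSet T) (hxw : G.Adj x w) (huw : IsParent T x u w)
    (hux : u ≠ x) : u ∉ leafSet T :=
  (hT.exchangeEdge_parent hL hx hxw huw hux).2.2

-- The exchange makes the parent `u` a leaf of another minimal tree, of which `y` is still a leaf.
lemma not_adj_of_isParent (hT : IsMinLeafSpanningTree G T)
    (hL : 2 < (leafSet T).ncard) (hx : x ∈ leafSet T) (hxw : G.Adj x w) (huw : IsParent T x u w)
    (hy : y ∈ leafSet T) (hyx : y ≠ x) : ¬ G.Adj y u := by
  by_cases hux : u = x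
  · exact hux ▸ hT.not_adj_of_mem_leafSet hL hy hx
  obtain ⟨hT', hleaf, -⟩ := hT.exchangeEdge_parent hL hx hxw huw hux
  refine hT'.not_adj_of_mem_leafSet ?_ (hleaf ▸ .inr ⟨hy, hyx⟩) (hleaf ▸ Set.mem_insert _ _)
  exact hL.trans_le (hT.ncard_leafSet_le hT'.le hT'.isTree)

lemma ncard_neighborSet_eq_two_of_isParent (hT : IsMinLeafSpanningTree G T)
    (hL : 2 < (leafSet T).ncard) (hx : x ∈ leafSet T) (hxw : G.Adj x w) (huw : IsParent T x u w)
    (hux : u ≠ x) : (T.neighborSet u).ncard = 2 := by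
  have hu : ((exchangeEdge T u w x w).neighborSet u).ncard = 1 := by
    have hmem : u ∈ leafSet (exchangeEdge T u w x w) :=
      (hT.exchangeEdge_parent hL hx hxw huw hux).2.1 ▸ Set.mem_insert _ _
    exact hmem
  rw [neighborSet_exchangeEdge_left hux huw.1.ne] at hu
  have := Set.ncard_sdiff_singleton_add_one (s := T.neighborSet u) huw.1
  omega

lemma eq_of_isParent_of_isParent (hT : IsMinLeafSpanningTree G T) (hL : 2 < (leafSet T).ncard)
    (hx : x ∈ leafSet T) (hxv : G.Adj x v) (huv : IsParent T x u v) (huw : IsParent T x u w) :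
    v = w := by
  by_cases hux : u = x
  · exact subsingleton_neighborSet_of_mem_leafSet hx (hux ▸ huv.1) (hux ▸ huw.1)
  by_contra hvw
  obtain ⟨t, htu⟩ := exists_isParent hT.isTree.connected hux
  have htv : t ≠ v := by rintro rfl; have := htu.2; have := huv.2; omega
  have htw : t ≠ w := by rintro rfl; have := htu.2; have := huw.2; omega
  have hthree : ({t, v, w} : Set V).ncard = 3 := Set.ncard_eq_three.2 ⟨t, v, w, htv, htw, hvw, rfl⟩
  have hsub : ({t, v, w} : Set V) ⊆ T.neighborSet u := by
    rintro _ (rfl | rfl | rfl)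
    exacts [htu.1.symm, huv.1, huw.1]
  have := Set.ncard_le_ncard hsub
  have := hT.ncard_neighborSet_eq_two_of_isParent hL hx hxv huv hux
  omega

lemma ncard_neighborSet_add_ncard_neighborSet_add_ncard_leafSet_le
    (hT : IsMinLeafSpanningTree G T) (hL : 2 < (leafSet T).ncard)
    (hx : x ∈ leafSet T) (hy : y ∈ leafSet T) (hxy : x ≠ y) :
    (G.neighborSet x).ncard + (G.neighborSet y).ncard + (leafSet T).ncard ≤ Nat.card V + 1 := by
  have : Nonempty V := ⟨x⟩
  have hpar (v : V) : ∃ u, v ≠ x → IsParent T x u v := by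
    by_cases hv : v = x
    · exact ⟨x, fun h ↦ absurd hv h⟩
    · exact (exists_isParent hT.isTree.connected hv).imp fun _ h _ ↦ h
  choose par hpar using hpar
  replace hpar : ∀ v ∈ G.neighborSet x, IsParent T x (par v) v := fun v hv ↦ hpar v hv.ne'
  have hinj : Set.InjOn par (G.neighborSet x) := fun v hv w hw h ↦
    hT.eq_of_isParent_of_isParent hL hx hv (hpar v hv) (h ▸ hpar w hw)
  have hdisj₁ : Disjoint (par '' G.neighborSet x) (G.neighborSet y) := by
    rw [Set.disjoint_left]
    rintro _ ⟨v, hv, rfl⟩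
    exact hT.not_adj_of_isParent hL hx hv (hpar v hv) hy hxy.symm
  have hdisj₂ : Disjoint (par '' G.neighborSet x ∪ G.neighborSet y) (leafSet T \ {x}) := by
    rw [Set.disjoint_left]
    rintro u (⟨v, hv, rfl⟩ | hyu) ⟨hu, hux⟩
    · exact hT.notMem_leafSet_of_isParent hL hx hv (hpar v hv) hux hu
    · exact hT.not_adj_of_mem_leafSet hL hy hu hyu
  have hle := Set.ncard_le_card ((par '' G.neighborSet x ∪ G.neighborSet y) ∪ (leafSet T \ {x}))
  rw [Set.ncard_union_eq hdisj₂, Set.ncard_union_eq hdisj₁, hinj.ncard_image] at hle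
  have := Set.ncard_sdiff_singleton_add_one hx
  omega

end IsMinLeafSpanningTree

-- The Ore-type theorem of Broersma and Tuinstra.
theorem exists_isTree_ncard_leafSet_le {k : ℕ} (hk : 2 ≤ k) (hG : G.Connected)
    (h : ∀ x y, x ≠ y → ¬ G.Adj x y →
      Nat.card V + 1 ≤ (G.neighborSet x).ncard + (G.neighborSet y).ncard + k) :
    ∃ T ≤ G, T.IsTree ∧ (leafSet T).ncard ≤ k := by
  obtain ⟨T, hT⟩ := exists_isMinLeafSpanningTree hG
  refine ⟨T, hT.le, hT.isTree, not_lt.1 fun hlt ↦ ?_⟩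
  have hL : 2 < (leafSet T).ncard := hk.trans_lt hlt
  obtain ⟨x, y, hx, hy, hxy⟩ := (Set.one_lt_ncard_iff (Set.toFinite (leafSet T))).1 (by omega)
  have := h x y hxy (hT.not_adj_of_mem_leafSet hL hx hy)
  have := hT.ncard_neighborSet_add_ncard_neighborSet_add_ncard_leafSet_le hL hx hy hxy
  omega

end MinimalTrees

section TestedPairs

/-- The five graphs on four vertices whose induced copies are subject to the degree condition. -/
def testGraphs : Set (SimpleGraph (Fin 4)) :=
  {pathUnionK1, triangleUnionK1, star13, star13PlusE, path4}

/-- The vertices `x` and `y` lie in a common induced copy in `G` of one of the `testGraphs`; the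
copy is encoded as a graph embedding. -/
def TestedPair (G : SimpleGraph V) (x y : V) : Prop :=
  ∃ H ∈ testGraphs, ∃ f : H ↪g G, x ∈ Set.range f ∧ y ∈ Set.range f

lemma TestedPair.symm : TestedPair G x y → TestedPair G y x :=
  fun ⟨H, hH, f, hx, hy⟩ ↦ ⟨H, hH, f, hy, hx⟩

lemma testedPair_of_forall_lt {H : SimpleGraph (Fin 4)} (hH : H ∈ testGraphs) (f : Fin 4 → V)
    (hf : ∀ i j, i < j → f i ≠ f j ∧ (G.Adj (f i) (f j) ↔ H.Adj i j)) (i j : Fin 4) :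
    TestedPair G (f i) (f j) := by
  have hinj : Function.Injective f :=
    Function.Injective.of_lt_imp_ne fun i j hij ↦ (hf i j hij).1
  refine ⟨H, hH, ⟨⟨f, hinj⟩, fun {i j} ↦ ?_⟩, Set.mem_range_self i, Set.mem_range_self j⟩
  rcases lt_trichotomy i j with hij | rfl | hij
  · exact (hf i j hij).2
  · simp only [SimpleGraph.irrefl]
  · exact (G.adj_comm _ _).trans ((hf j i hij).2.trans (H.adj_comm _ _))

lemma testedPair_of_not_adj_right (hnxy : ¬ G.Adj x y) (hxu : G.Adj x u) (hnuy : ¬ G.Adj u y)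
    (hvx : v ≠ x) (hvu : v ≠ u) (hvy : v ≠ y) (h : G.Adj v x ∨ G.Adj v u) :
    TestedPair G x y := by
  have hxy : x ≠ y := by rintro rfl; exact hnuy hxu.symm
  have huy : u ≠ y := by rintro rfl; exact hnxy hxu
  have hxv_iff := G.adj_comm x v
  have huv_iff := G.adj_comm u v
  by_cases hx : G.Adj v x <;> by_cases hu : G.Adj v u <;> by_cases hy : G.Adj v y
  · exact testedPair_of_forall_lt (H := star13PlusE) (by simp [testGraphs]) ![v, x, u, y]
      (by simp [Fin.forall_fin_succ, star13PlusE, *, hxu.ne]) 1 3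
  · exact testedPair_of_forall_lt (H := triangleUnionK1) (by simp [testGraphs]) ![v, x, u, y]
      (by simp [Fin.forall_fin_succ, triangleUnionK1, *, hxu.ne]) 1 3
  · exact testedPair_of_forall_lt (H := path4) (by simp [testGraphs]) ![u, x, v, y]
      (by simp [Fin.forall_fin_succ, path4, *, hxu.ne', hxu.symm, hvu.symm, hvx.symm]) 1 3
  · exact testedPair_of_forall_lt (H := pathUnionK1) (by simp [testGraphs]) ![u, x, v, y]
      (by simp [Fin.forall_fin_succ, pathUnionK1, *, hxu.ne', hxu.symm, hvu.symm, hvx.symm]) 1 3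
  · exact testedPair_of_forall_lt (H := path4) (by simp [testGraphs]) ![x, u, v, y]
      (by simp [Fin.forall_fin_succ, path4, *, hxu.ne, hvu.symm, hvx.symm]) 0 3
  · exact testedPair_of_forall_lt (H := pathUnionK1) (by simp [testGraphs]) ![x, u, v, y]
      (by simp [Fin.forall_fin_succ, pathUnionK1, *, hxu.ne, hvu.symm, hvx.symm]) 0 3
  all_goals exact absurd h (not_or.2 ⟨hx, hu⟩)

lemma testedPair_of_common_neighbor (hxy : x ≠ y) (hnxy : ¬ G.Adj x y) (hxu : G.Adj x u)
    (huy : G.Adj u y) (hnvy : ¬ G.Adj v y) (hvx : v ≠ x) (hvy : v ≠ y) : TestedPair G x y := by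
  have hvu : v ≠ u := by rintro rfl; exact hnvy huy
  have hxv_iff := G.adj_comm x v
  have huv_iff := G.adj_comm u v
  have hyv_iff := G.adj_comm y v
  by_cases hx : G.Adj v x <;> by_cases hu : G.Adj v u
  · exact testedPair_of_forall_lt (H := star13PlusE) (by simp [testGraphs]) ![u, x, v, y]
      (by simp [Fin.forall_fin_succ, star13PlusE, *, hxu.symm, hxu.ne', huy.ne, hvu.symm,
        hvx.symm]) 1 3
  · exact testedPair_of_forall_lt (H := path4) (by simp [testGraphs]) ![v, x, u, y]
      (by simp [Fin.forall_fin_succ, path4, *, hxu.ne, huy.ne]) 1 3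
  · exact testedPair_of_forall_lt (H := star13) (by simp [testGraphs]) ![u, v, x, y]
      (by simp [Fin.forall_fin_succ, star13, *, hxu.symm, hxu.ne', huy.ne, hvu.symm]) 2 3
  · exact testedPair_of_forall_lt (H := pathUnionK1) (by simp [testGraphs]) ![x, u, y, v]
      (by simp [Fin.forall_fin_succ, pathUnionK1, *, hxu.ne, huy.ne, hvu.symm, hvx.symm,
        hvy.symm]) 0 2

lemma adj_right_of_not_testedPair (hG : G.Connected) (hnxy : ¬ G.Adj x y)
    (h : ¬ TestedPair G x y) (hxu : G.Adj x u) : G.Adj u y := by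
  by_contra hnuy
  have hclosed : ∀ w ∈ ({x, u} : Set V), ∀ v, G.Adj w v → v ∈ ({x, u} : Set V) := by
    intro w hw v hwv
    by_contra hv
    obtain ⟨hvx, hvu⟩ : v ≠ x ∧ v ≠ u := by simpa using hv
    have hvy : v ≠ y := by
      rintro rfl
      rcases hw with rfl | rfl
      exacts [hnxy hwv, hnuy hwv]
    refine h (testedPair_of_not_adj_right hnxy hxu hnuy hvx hvu hvy ?_)
    rcases hw with rfl | rfl
    exacts [.inl hwv.symm, .inr hwv.symm]
  rcases mem_of_connected_of_forall_adj_mem hG (Set.mem_insert x {u}) hclosed y with rfl | rfl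
  exacts [hnuy hxu.symm, hnxy hxu]

lemma neighborSet_eq_compl_of_not_testedPair (hG : G.Connected) (hxy : x ≠ y)
    (hnxy : ¬ G.Adj x y) (h : ¬ TestedPair G x y) : G.neighborSet y = {x, y}ᶜ := by
  have : Nontrivial V := ⟨x, y, hxy⟩
  obtain ⟨u, hxu⟩ := hG.preconnected.exists_adj_of_nontrivial x
  have huy := adj_right_of_not_testedPair hG hnxy h hxu
  ext v
  simp only [mem_neighborSet, Set.mem_compl_iff, Set.mem_insert_iff, Set.mem_singleton_iff, not_or]
  refine ⟨fun hyv ↦ ⟨?_, hyv.ne'⟩, fun ⟨hvx, hvy⟩ ↦ ?_⟩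
  · rintro rfl
    exact hnxy hyv.symm
  · by_contra hnyv
    exact h (testedPair_of_common_neighbor hxy hnxy hxu huy (hnyv ·.symm) hvx hvy)

lemma TestedPair.exists_finset (h : TestedPair G x y) :
    ∃ S : Finset V, S.card = 4 ∧ (∃ H ∈ testGraphs, Nonempty (G.induce (S : Set V) ≃g H)) ∧
      x ∈ S ∧ y ∈ S := by
  obtain ⟨H, hH, f, hx, hy⟩ := h
  have hrange : ((Finset.univ.map f.toEmbedding : Finset V) : Set V) = Set.range f := by simp
  refine ⟨Finset.univ.map f.toEmbedding, by simp, ⟨H, hH, ?_⟩, ?_, ?_⟩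
  · rw [hrange]
    exact ⟨f.isoInduceRange.symm⟩
  · rwa [← Finset.mem_coe, hrange]
  · rwa [← Finset.mem_coe, hrange]

variable [Finite V]

lemma card_add_one_le_of_not_testedPair (hG : G.Connected) (hxy : x ≠ y) (hnxy : ¬ G.Adj x y)
    (h : ¬ TestedPair G x y) :
    Nat.card V + 1 ≤ (G.neighborSet x).ncard + (G.neighborSet y).ncard + 2 := by
  have : Nontrivial V := ⟨x, y, hxy⟩
  have hx : 0 < (G.neighborSet x).ncard :=
    (Set.ncard_pos).2 (hG.preconnected.exists_adj_of_nontrivial x)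
  have hy := neighborSet_eq_compl_of_not_testedPair hG hxy hnxy h
  have hcard := Set.ncard_add_ncard_compl ({x, y} : Set V)
  rw [Set.ncard_pair hxy, ← hy] at hcard
  omega

end TestedPairs

lemma ncard_neighborSet_eq_degree (G : SimpleGraph V) (v : V) [Fintype (G.neighborSet v)] :
    (G.neighborSet v).ncard = G.degree v :=
  Set.ncard_eq_toFinset_card' _

end

/-- **Theorem 2.** For a given integer `k ≥ 2`, every connected graph on `n` vertices
satisfying `d(x) + d(y) ≥ n - k + 1` for each pair of nonadjacent vertices `x, y` of every
4-element induced subgraph isomorphic to `K_{1,2} ∪ K_1`, `K_3 ∪ K_1`, `K_{1,3}`,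
`K_{1,3} + e` or `P_4`, has a spanning tree with at most `k` leaves. -/
theorem stmt1 {V : Type*} [Fintype V] [DecidableEq V]
    (G : SimpleGraph V) [DecidableRel G.Adj]
    (k : ℕ) (hk : 2 ≤ k) (hconn : G.Connected)
    (hcond : ∀ S : Finset V, S.card = 4 →
      (Nonempty (G.induce (S : Set V) ≃g pathUnionK1) ∨
       Nonempty (G.induce (S : Set V) ≃g triangleUnionK1) ∨
       Nonempty (G.induce (S : Set V) ≃g star13) ∨
       Nonempty (G.induce (S : Set V) ≃g star13PlusE) ∨
       Nonempty (G.induce (S : Set V) ≃g path4)) →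
      ∀ x ∈ S, ∀ y ∈ S, x ≠ y → ¬ G.Adj x y →
        (Fintype.card V : ℤ) - k + 1 ≤ G.degree x + G.degree y) :
    ∃ T : SimpleGraph V, T ≤ G ∧ T.IsTree ∧
      {v : V | (T.neighborSet v).ncard = 1}.ncard ≤ k := by
  refine exists_isTree_ncard_leafSet_le hk hconn fun x y hxy hnxy ↦ ?_
  by_cases h : TestedPair G x y
  · obtain ⟨S, hS, ⟨H, hH, hiso⟩, hx, hy⟩ := h.exists_finset
    have hdeg := hcond S hS (by rcases hH with rfl | rfl | rfl | rfl | rfl <;> simp [hiso])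
      x hx y hy hxy hnxy
    rw [Nat.card_eq_fintype_card, ncard_neighborSet_eq_degree, ncard_neighborSet_eq_degree]
    omega
  · exact (card_add_one_le_of_not_testedPair hconn hxy hnxy h).trans (by gcongr)
end

section
/- Let k ≥ 2 be an integer and let G be a connected simple graph on n vertices such that d(u) + d(v) ≥ n − k + 1 for every pair of nonadjacent vertices u and v. Then G has a spanning tree with at most k leaves. -/
open SimpleGraph

/-!
Let `T` be a spanning tree of `G` with as few leaves as possible, and suppose it has at least three.
If two leaves were adjacent in `G`, adding that edge and removing a tree edge at a branch vertex of
the path between them would save a leaf; so the leaves are independent in `G`. Root `T` at a leaf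
`u`, and let `p ≠ u` be the parent of a `G`-neighbour `x` of `u`. Replacing the edge `px` by `ux`
turns `u` into an internal vertex, so by minimality it turns `p` into a leaf: `p` has degree two in
`T`, and in the new tree, again minimal, `p` is a leaf together with any other leaf `v` of `T`.
Therefore `p` is not adjacent to `v` in `G`. Since degree-two vertices have a single child, taking
parents is injective on the `G`-neighbours of `u`, and its image, the `G`-neighbours of `v` and the
leaves other than `u` are disjoint sets of vertices. With `ℓ` leaves this gives
`d(u) + d(v) + (ℓ - 1) ≤ n`.
-/

namespace MinLeafSpanningTree

variable {V : Type*} {G T : SimpleGraph V} {u v x : V}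

/-- The leaves of a graph: its vertices of degree one. -/
def leaves (T : SimpleGraph V) : Set V := {v | (T.neighborSet v).ncard = 1}

lemma mem_leaves : v ∈ leaves T ↔ (T.neighborSet v).ncard = 1 := Iff.rfl

section Degrees

variable [DecidableEq V]

lemma ncard_neighborSet_deleteEdges_singleton [Finite V] {e : Sym2 V} (he : e ∈ T.edgeSet) (a : V) :
    ((T.deleteEdges {e}).neighborSet a).ncard + (if a ∈ e then 1 else 0) =
      (T.neighborSet a).ncard := by
  split_ifs with ha
  · obtain ⟨b, rfl⟩ := Sym2.mem_iff_exists.1 ha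
    have hdiff : (T.deleteEdges {s(a, b)}).neighborSet a = T.neighborSet a \ {b} := by
      ext c
      simp only [mem_neighborSet, deleteEdges_adj, Set.mem_singleton_iff, Sym2.congr_right,
        Set.mem_sdiff]
    rw [hdiff, Set.ncard_sdiff_singleton_add_one (show b ∈ T.neighborSet a from he)]
  · rw [add_zero]
    congr 1
    ext c
    simp only [mem_neighborSet, deleteEdges_adj, Set.mem_singleton_iff, and_iff_left_iff_imp]
    rintro - rfl
    exact ha (Sym2.mem_mk_left a c)

lemma ncard_neighborSet_sup_edge [Finite V] (hne : u ≠ x) (hux : ¬ T.Adj u x) (a : V) :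
    ((T ⊔ edge u x).neighborSet a).ncard =
      (T.neighborSet a).ncard + (if a ∈ s(u, x) then 1 else 0) := by
  have hdelete : (T ⊔ edge u x).deleteEdges {s(u, x)} = T := by
    rw [deleteEdges_sup, deleteEdges_edge (Set.mem_singleton _), sup_bot_eq, deleteEdges_eq_self]
    simpa using hux
  have hmem : s(u, x) ∈ (T ⊔ edge u x).edgeSet := by simp [hne]
  rw [← ncard_neighborSet_deleteEdges_singleton hmem, hdelete]

end Degrees

section Exchange

/-- The edge exchange on `T` that removes the edge `e` and joins `u` to `x`. -/
def exchange (T : SimpleGraph V) (e : Sym2 V) (u x : V) : SimpleGraph V :=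
  T.deleteEdges {e} ⊔ edge u x

lemma exchange_le {e : Sym2 V} (hT : T ≤ G) (hux : G.Adj u x) : exchange T e u x ≤ G :=
  sup_le ((deleteEdges_le _).trans hT) ((edge_le_iff _).2 (.inr hux))

lemma ncard_neighborSet_exchange [DecidableEq V] [Finite V] {e : Sym2 V} (he : e ∈ T.edgeSet)
    (hne : u ≠ x) (hux : ¬ T.Adj u x) (a : V) :
    ((exchange T e u x).neighborSet a).ncard + (if a ∈ e then 1 else 0) =
      (T.neighborSet a).ncard + (if a ∈ s(u, x) then 1 else 0) := by
  have hux' : ¬ (T.deleteEdges {e}).Adj u x := fun h => hux (deleteEdges_le _ h)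
  rw [exchange, ncard_neighborSet_sup_edge hne hux',
    ← ncard_neighborSet_deleteEdges_singleton he a]
  exact add_right_comm _ _ _

lemma not_reachable_deleteEdges_of_mem_edges (hT : T.IsAcyclic) {q : T.Walk u x} (hq : q.IsPath)
    {e : Sym2 V} (he : e ∈ q.edges) : ¬ (T.deleteEdges {e}).Reachable u x := by
  classical
  intro hreach
  obtain ⟨r, hr⟩ := hreach.exists_isPath
  have hrq : r.mapLe (deleteEdges_le _) = q :=
    congrArg Subtype.val ((hT.subsingleton_path u x).elim ⟨_, hr.mapLe _⟩ ⟨q, hq⟩)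
  have her : e ∈ r.edges := by simpa [← hrq] using he
  simpa using r.edges_subset_edgeSet her

lemma not_adj_of_mem_edges (hT : T.IsAcyclic) {q : T.Walk u x} (hq : q.IsPath) {e : Sym2 V}
    (he : e ∈ q.edges) (hne : e ≠ s(u, x)) : ¬ T.Adj u x := fun hux =>
  not_reachable_deleteEdges_of_mem_edges hT hq he
    (Adj.reachable (by simpa [deleteEdges_adj, hux] using hne.symm))

lemma isTree_exchange (hT : T.IsTree) {q : T.Walk u x} (hq : q.IsPath) {e : Sym2 V}
    (he : e ∈ q.edges) (hne : u ≠ x) (hux : ¬ T.Adj u x) : (exchange T e u x).IsTree := by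
  refine ⟨?_, (hT.isAcyclic.anti (deleteEdges_le _)).sup_edge_of_not_reachable
    (not_reachable_deleteEdges_of_mem_edges hT.isAcyclic hq he)⟩
  have hadj : (T ⊔ edge u x).Adj x u := by simp [edge_adj, hne.symm]
  have hnot : s(x, u) ∉ (q.mapLe le_sup_left : (T ⊔ edge u x).Walk u x).edges := by
    simpa using fun h => hux (q.adj_of_mem_edges h).symm
  have hcycle := Path.cons_isCycle ⟨_, hq.mapLe le_sup_left⟩ hadj hnot
  have hbridge : ¬ (T ⊔ edge u x).IsBridge e := fun h =>
    h.notMem_edges_of_isCycle hcycle (by simp [he])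
  induction e with | h p w =>
  refine ((hT.connected.mono le_sup_left).connected_delete_edge_of_not_isBridge hbridge).mono ?_
  rw [deleteEdges_sup]
  exact sup_le_sup_left (deleteEdges_le _) _

variable [Finite V]

lemma leaves_exchange_subset_insert {p : V} (hu : u ∈ leaves T) (hne : u ≠ x)
    (hux : ¬ T.Adj u x) (hpx : T.Adj p x) :
    leaves (exchange T s(p, x) u x) ⊆ insert p (leaves T \ {u}) := by
  classical
  intro a ha
  have hdeg := ncard_neighborSet_exchange (e := s(p, x)) hpx hne hux a
  simp only [mem_leaves, Set.mem_insert_iff, Set.mem_sdiff, Set.mem_singleton_iff,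
    Sym2.mem_iff] at *
  grind

lemma leaves_exchange_subset_insert_of_three_le {p w : V} (hu : u ∈ leaves T) (hv : v ∈ leaves T)
    (hne : u ≠ v) (huv : ¬ T.Adj u v) (hpw : T.Adj p w) (hp : 3 ≤ (T.neighborSet p).ncard) :
    leaves (exchange T s(p, w) u v) ⊆ insert w (leaves T \ {u, v}) := by
  classical
  intro a ha
  have hdeg := ncard_neighborSet_exchange (e := s(p, w)) hpw hne huv a
  simp only [mem_leaves, Set.mem_insert_iff, Set.mem_sdiff, Set.mem_singleton_iff,
    Sym2.mem_iff] at *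
  grind

end Exchange

section Branch

variable [Finite V]

lemma ncard_neighborSet_toSubgraph_lt {p y : V} (q : T.Walk u v) (hpy : T.Adj p y)
    (hy : y ∉ q.support) : (q.toSubgraph.neighborSet p).ncard < (T.neighborSet p).ncard := by
  refine Set.ncard_lt_ncard ((Set.ssubset_iff_of_subset (Subgraph.neighborSet_subset _ _)).2
    ⟨y, hpy, fun h => hy ?_⟩)
  simpa using Subgraph.Adj.snd_mem h

lemma exists_notMem_support_of_three_le_ncard_leaves {q : T.Walk u v} (hq : q.IsPath)
    (hleaves : 3 ≤ (leaves T).ncard) : ∃ z, z ∉ q.support := by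
  obtain ⟨z, hz, hzuv⟩ : ∃ z ∈ leaves T, z ∉ ({u, v} : Set V) := by
    refine Set.exists_mem_notMem_of_ncard_lt_ncard ?_
    have := Set.ncard_insert_le u {v}
    rw [Set.ncard_singleton] at this
    omega
  simp only [Set.mem_insert_iff, Set.mem_singleton_iff, not_or] at hzuv
  exact ⟨z, hq.isTrail.not_mem_support_of_subsingleton_neighborSet hzuv.1 hzuv.2
    (Set.ncard_le_one_iff_subsingleton.1 hz.le)⟩

lemma exists_branch_mem_edges (hT : T.Connected) {q : T.Walk u v} (hq : q.IsPath)
    (hu : u ∈ leaves T) (hv : v ∈ leaves T) (hne : u ≠ v) (hleaves : 3 ≤ (leaves T).ncard) :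
    ∃ p w, s(p, w) ∈ q.edges ∧ 3 ≤ (T.neighborSet p).ncard ∧ p ≠ u ∧ p ≠ v := by
  obtain ⟨z, hz⟩ := exists_notMem_support_of_three_le_ncard_leaves hq hleaves
  obtain ⟨r⟩ := hT u z
  obtain ⟨d, -, hd, hdz⟩ := r.exists_boundary_dart {a | a ∈ q.support} q.start_mem_support hz
  have hlt := ncard_neighborSet_toSubgraph_lt q d.adj hdz
  obtain ⟨i, hi, hil⟩ := Walk.mem_support_iff_exists_getVert.1 hd
  have hnil : ¬ q.Nil := Walk.not_nil_of_ne hne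
  rw [← hi] at hlt
  have hi0 : i ≠ 0 := by
    rintro rfl
    rw [q.getVert_zero, hq.neighborSet_toSubgraph_startpoint hnil, Set.ncard_singleton] at hlt
    exact hlt.ne' hu
  have hil' : i ≠ q.length := by
    rintro rfl
    rw [q.getVert_length, hq.neighborSet_toSubgraph_endpoint hnil, Set.ncard_singleton] at hlt
    exact hlt.ne' hv
  have hlt_length : i < q.length := by omega
  rw [hq.ncard_neighborSet_toSubgraph_internal_eq_two hi0 hlt_length] at hlt
  exact ⟨q.getVert i, q.getVert (i + 1),
    Walk.adj_toSubgraph_iff_mem_edges.1 (q.toSubgraph_adj_getVert hlt_length), hlt,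
    fun h => hi0 ((hq.getVert_eq_start_iff hil).1 h),
    fun h => hil' ((hq.getVert_eq_end_iff hil).1 h)⟩

end Branch

section Parent

/-- The parent of `x` in the tree `T` rooted at `u`: the penultimate vertex of the path from `u` to
`x`. The root is its own parent. -/
noncomputable def parent (hT : T.IsTree) (u x : V) : V :=
  (hT.existsUnique_path u x).choose.penultimate

lemma parent_eq_penultimate (hT : T.IsTree) {q : T.Walk u x} (hq : q.IsPath) :
    parent hT u x = q.penultimate := by
  rw [parent, (hT.existsUnique_path u x).unique (hT.existsUnique_path u x).choose_spec.1 hq]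

lemma mem_neighborSet_parent_diff (hT : T.IsTree) (hne : u ≠ x) :
    x ∈ T.neighborSet (parent hT u x) \ {parent hT u (parent hT u x)} := by
  obtain ⟨q, hq⟩ := hT.connected.exists_isPath u x
  have hadj := q.adj_penultimate (Walk.not_nil_of_ne hne)
  have hx : x ∉ q.dropLast.support := by
    rw [← q.concat_dropLast hadj, Walk.concat_isPath_iff] at hq
    exact hq.2
  have hmem : q.dropLast.penultimate ∈ q.dropLast.support := Walk.getVert_mem_support _ _
  rw [parent_eq_penultimate hT hq, parent_eq_penultimate hT hq.dropLast]
  exact ⟨hadj, (ne_of_mem_of_not_mem hmem hx).symm⟩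

lemma injOn_parent [Finite V] (hT : T.IsTree) (hu : u ∈ leaves T) :
    Set.InjOn (parent hT u) {x | u ≠ x ∧
      (parent hT u x = u ∨ (T.neighborSet (parent hT u x)).ncard = 2)} := by
  rintro x ⟨hx, hdeg⟩ y ⟨hy, -⟩ hxy
  have hone : (T.neighborSet (parent hT u x) \ {parent hT u (parent hT u x)}).ncard ≤ 1 := by
    by_cases hroot : parent hT u x = u
    · rw [hroot]
      exact (Set.ncard_le_ncard Set.sdiff_subset).trans_eq hu
    · have hparent := (mem_neighborSet_parent_diff hT (Ne.symm hroot)).1.symm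
      have := Set.ncard_sdiff_singleton_add_one
        (show _ ∈ T.neighborSet (parent hT u x) from hparent)
      rw [hdeg.resolve_left hroot] at this
      omega
  exact Set.ncard_le_one_iff_subsingleton.1 hone (mem_neighborSet_parent_diff hT hx)
    (hxy ▸ mem_neighborSet_parent_diff hT hy)

end Parent

/-- A spanning tree of `G` with the fewest possible leaves. -/
def IsMinLeafSpanningTree (G T : SimpleGraph V) : Prop :=
  MinimalFor (fun T => T ≤ G ∧ T.IsTree) (fun T => (leaves T).ncard) T

lemma exists_isMinLeafSpanningTree (hG : G.Connected) : ∃ T, IsMinLeafSpanningTree G T :=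
  exists_minimalFor_of_wellFoundedLT _ _ hG.exists_isTree_le

namespace IsMinLeafSpanningTree

lemma le (hT : IsMinLeafSpanningTree G T) : T ≤ G := hT.prop.1

lemma isTree (hT : IsMinLeafSpanningTree G T) : T.IsTree := hT.prop.2

lemma ncard_leaves_le {S : SimpleGraph V} (hT : IsMinLeafSpanningTree G T) (hS : S ≤ G)
    (hStree : S.IsTree) : (leaves T).ncard ≤ (leaves S).ncard :=
  MinimalFor.le (f := fun T : SimpleGraph V => (leaves T).ncard) hT ⟨hS, hStree⟩

lemma of_ncard_leaves_le {S : SimpleGraph V} (hT : IsMinLeafSpanningTree G T) (hS : S ≤ G)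
    (hStree : S.IsTree) (hle : (leaves S).ncard ≤ (leaves T).ncard) : IsMinLeafSpanningTree G S :=
  ⟨⟨hS, hStree⟩, fun _ hR _ => hle.trans (hT.ncard_leaves_le hR.1 hR.2)⟩

variable [Finite V]

lemma not_adj_of_mem_leaves (hT : IsMinLeafSpanningTree G T) (hleaves : 3 ≤ (leaves T).ncard)
    (hu : u ∈ leaves T) (hv : v ∈ leaves T) : ¬ G.Adj u v := by
  intro huv
  obtain ⟨q, hq⟩ := hT.isTree.connected.exists_isPath u v
  obtain ⟨p, w, hpw, hp, hpu, hpv⟩ :=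
    exists_branch_mem_edges hT.isTree.connected hq hu hv huv.ne hleaves
  have hTuv : ¬ T.Adj u v := not_adj_of_mem_edges hT.isTree.isAcyclic hq hpw (by grind)
  have hmin : (leaves T).ncard ≤ (leaves (exchange T s(p, w) u v)).ncard :=
    hT.ncard_leaves_le (exchange_le hT.le huv) (isTree_exchange hT.isTree hq hpw huv.ne hTuv)
  have hsubset := Set.ncard_le_ncard
    (leaves_exchange_subset_insert_of_three_le hu hv huv.ne hTuv (q.adj_of_mem_edges hpw) hp)
  have hinsert := Set.ncard_insert_le w (leaves T \ {u, v})
  have hdiff : (leaves T \ {u, v}).ncard + 2 = (leaves T).ncard := by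
    rw [← Set.ncard_pair huv.ne]
    exact Set.ncard_sdiff_add_ncard_of_subset (Set.pair_subset hu hv)
  omega

lemma exists_leaves_eq_insert_parent (hT : IsMinLeafSpanningTree G T) (hu : u ∈ leaves T)
    (hux : G.Adj u x) (hp : parent hT.isTree u x ≠ u) :
    (T.neighborSet (parent hT.isTree u x)).ncard = 2 ∧
      ∃ S, IsMinLeafSpanningTree G S ∧ (leaves S).ncard = (leaves T).ncard ∧
        leaves S = insert (parent hT.isTree u x) (leaves T \ {u}) := by
  classical
  obtain ⟨q, hq⟩ := hT.isTree.connected.exists_isPath u x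
  rw [parent_eq_penultimate hT.isTree hq] at hp ⊢
  have hnil : ¬ q.Nil := Walk.not_nil_of_ne hux.ne
  have hpx : T.Adj q.penultimate x := q.adj_penultimate hnil
  have hedge := Walk.mk_penultimate_end_mem_edges hnil
  generalize q.penultimate = p at *
  have hTux : ¬ T.Adj u x := not_adj_of_mem_edges hT.isTree.isAcyclic hq hedge (by grind)
  set S := exchange T s(p, x) u x with hS
  have hSG : S ≤ G := exchange_le hT.le hux
  have hStree : S.IsTree := isTree_exchange hT.isTree hq hedge hux.ne hTux
  have hmin : (leaves T).ncard ≤ (leaves S).ncard := hT.ncard_leaves_le hSG hStree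
  have hinsert : (insert p (leaves T \ {u})).ncard ≤ (leaves T).ncard :=
    (Set.ncard_insert_le _ _).trans_eq (Set.ncard_sdiff_singleton_add_one hu)
  have hleaves : leaves S = insert p (leaves T \ {u}) :=
    Set.eq_of_subset_of_ncard_le (leaves_exchange_subset_insert hu hux.ne hTux hpx)
      (hinsert.trans hmin)
  have hcard : (leaves S).ncard = (leaves T).ncard := (hleaves ▸ hinsert).antisymm hmin
  refine ⟨?_, S, hT.of_ncard_leaves_le hSG hStree hcard.le, hcard, hleaves⟩
  have hpS : (S.neighborSet p).ncard = 1 := mem_leaves.1 (hleaves ▸ Set.mem_insert p _)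
  have hdeg := ncard_neighborSet_exchange (e := s(p, x)) hpx hux.ne hTux p
  rw [← hS, hpS] at hdeg
  simpa [hp, hpx.ne] using hdeg.symm

lemma parent_eq_or_ncard_neighborSet_eq_two (hT : IsMinLeafSpanningTree G T) (hu : u ∈ leaves T)
    (hux : G.Adj u x) :
    parent hT.isTree u x = u ∨ (T.neighborSet (parent hT.isTree u x)).ncard = 2 :=
  or_iff_not_imp_left.2 fun hp => (hT.exists_leaves_eq_insert_parent hu hux hp).1

lemma parent_notMem_leaves_diff (hT : IsMinLeafSpanningTree G T) (hu : u ∈ leaves T)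
    (hux : G.Adj u x) : parent hT.isTree u x ∉ leaves T \ {u} := by
  rintro ⟨hleaf, hne⟩
  have htwo := (hT.parent_eq_or_ncard_neighborSet_eq_two hu hux).resolve_left hne
  rw [mem_leaves] at hleaf
  omega

lemma not_adj_parent (hT : IsMinLeafSpanningTree G T) (hleaves : 3 ≤ (leaves T).ncard)
    (hu : u ∈ leaves T) (hv : v ∈ leaves T) (hne : u ≠ v) (hux : G.Adj u x) :
    ¬ G.Adj v (parent hT.isTree u x) := by
  by_cases hp : parent hT.isTree u x = u
  · rw [hp]
    exact hT.not_adj_of_mem_leaves hleaves hv hu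
  · obtain ⟨-, S, hS, hcard, hSleaves⟩ := hT.exists_leaves_eq_insert_parent hu hux hp
    exact hS.not_adj_of_mem_leaves (hcard ▸ hleaves)
      (hSleaves ▸ Set.mem_insert_of_mem _ ⟨hv, hne.symm⟩) (hSleaves ▸ Set.mem_insert _ _)

lemma injOn_parent_neighborSet (hT : IsMinLeafSpanningTree G T) (hu : u ∈ leaves T) :
    Set.InjOn (parent hT.isTree u) (G.neighborSet u) := by
  refine Set.InjOn.mono (fun x hux => ?_) (injOn_parent hT.isTree hu)
  exact ⟨hux.ne, hT.parent_eq_or_ncard_neighborSet_eq_two hu hux⟩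

lemma ncard_neighborSet_add_ncard_leaves_le (hT : IsMinLeafSpanningTree G T)
    (hleaves : 3 ≤ (leaves T).ncard) (hu : u ∈ leaves T) (hv : v ∈ leaves T) (hne : u ≠ v) :
    (G.neighborSet u).ncard + (G.neighborSet v).ncard + (leaves T).ncard ≤ Nat.card V + 1 := by
  set P := parent hT.isTree u '' G.neighborSet u
  have hPv : Disjoint P (G.neighborSet v) := by
    rw [Set.disjoint_left]
    rintro _ ⟨x, hux, rfl⟩
    exact hT.not_adj_parent hleaves hu hv hne hux
  have hPleaves : Disjoint P (leaves T \ {u}) := by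
    rw [Set.disjoint_left]
    rintro _ ⟨x, hux, rfl⟩
    exact hT.parent_notMem_leaves_diff hu hux
  have hvleaves : Disjoint (G.neighborSet v) (leaves T \ {u}) :=
    Set.disjoint_left.2 fun _ hadj hleaf => hT.not_adj_of_mem_leaves hleaves hv hleaf.1 hadj
  have hcard : (G.neighborSet u).ncard + (G.neighborSet v).ncard + (leaves T \ {u}).ncard ≤
      Nat.card V := by
    rw [← (hT.injOn_parent_neighborSet hu).ncard_image, ← Set.ncard_union_eq hPv,
      ← Set.ncard_union_eq (hPleaves.union_left hvleaves)]
    exact Set.ncard_le_card _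
  rw [← Set.ncard_sdiff_singleton_add_one hu]
  omega

end IsMinLeafSpanningTree
end MinLeafSpanningTree


/-- **Theorem C.** For a given integer `k ≥ 2`, every connected graph on `n` vertices
satisfying `d(u) + d(v) ≥ n - k + 1` for each pair of nonadjacent vertices `u, v` has a
spanning tree with at most `k` leaves. -/
theorem stmt4 {V : Type*} [Fintype V] [DecidableEq V]
    (G : SimpleGraph V) [DecidableRel G.Adj]
    (k : ℕ) (hk : 2 ≤ k) (hconn : G.Connected)
    (hcond : ∀ u v : V, u ≠ v → ¬ G.Adj u v →
      (Fintype.card V : ℤ) - k + 1 ≤ G.degree u + G.degree v) :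
    ∃ T : SimpleGraph V, T ≤ G ∧ T.IsTree ∧
      {v : V | (T.neighborSet v).ncard = 1}.ncard ≤ k := by
  obtain ⟨T, hT⟩ := MinLeafSpanningTree.exists_isMinLeafSpanningTree hconn
  refine ⟨T, hT.le, hT.isTree, ?_⟩
  change (MinLeafSpanningTree.leaves T).ncard ≤ k
  by_contra! hleaves
  obtain ⟨u, hu, v, hv, hne⟩ := (Set.one_lt_ncard (Set.toFinite _)).1 (hk.trans hleaves.le)
  have hupper := hT.ncard_neighborSet_add_ncard_leaves_le (by omega) hu hv hne
  have hlower := hcond u v hne (hT.not_adj_of_mem_leaves (by omega) hu hv)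
  have hdegree (a : V) : (G.neighborSet a).ncard = G.degree a := by
    rw [← Nat.card_coe_set_eq, Nat.card_eq_fintype_card, card_neighborSet_eq_degree]
  rw [hdegree, hdegree, Nat.card_eq_fintype_card] at hupper
  omega
end
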